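/- Let n ≥ 2 and d ≥ 1 be integers, m = d·n, and s = (s_1,…,s_m) a scoring vector with all entries strictly positive. Then there exists a preference profile P for n agents over m items such that, for the non-interleaving picking sequence k = (d, d, …, d), both of the following hold, where π ranges over all permutations of the n agents and P_π permutes the agents' rankings according to π: (i) ( Σ_{j=d+1}^{2d} s_j ) / ( Σ_{j=(n-1)d+1}^{m} s_j ) ≤ ( max_{π} SW^e_{P_π}(k) ) / ( min_{π} SW^e_{P_π}(k) ) ≤ ( Σ_{j=1}^{d} s_j ) / ( Σ_{j=(n-1)d+1}^{m} s_j ); and (ii) ( (Σ_{j=1}^{d} s_j)^{n-1} · Σ_{j=d+1}^{2d} s_j ) / ( Π_{i=1}^{n} Σ_{j=(i-1)d+1}^{id} s_j ) ≤ ( max_{π} SW^n_{P_π}(k) ) / ( min_{π} SW^n_{P_π}(k) ) ≤ ( Σ_{j=1}^{d} s_j )^{n} / ( Π_{i=1}^{n} Σ_{j=(i-1)d+1}^{id} s_j ). -/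

import Mathlib

/-- The `k` most preferred items of `S` under the ranking `σ` (where `σ r` is the item of
0-based rank `r`, so `σ.symm x` is the rank of item `x`): the items of `S` having fewer
than `k` strictly better items inside `S`. -/
def topk {m : ℕ} (σ : Fin m ≃ Fin m) (S : Finset (Fin m)) (k : ℕ) : Finset (Fin m) :=
  S.filter fun x => (S.filter fun y => σ.symm y < σ.symm x).card < k

/-- Items remaining before the `i`-th agent (0-based) picks, under profile `P` (agent `i`
has ranking `P i`) and pick-count vector `k` (agent `i` picks `k i` items). -/
def remaining {m : ℕ} (P : ℕ → Fin m ≃ Fin m) (k : ℕ → ℕ) : ℕ → Finset (Fin m)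
  | 0 => Finset.univ
  | i + 1 => remaining P k i \ topk (P i) (remaining P k i) (k i)

/-- The set of items greedily picked by the `i`-th agent (0-based). -/
def alloc {m : ℕ} (P : ℕ → Fin m ≃ Fin m) (k : ℕ → ℕ) (i : ℕ) : Finset (Fin m) :=
  topk (P i) (remaining P k i) (k i)

/-- The utility of the `i`-th agent (0-based): the sum of the scores `s r` over the
1-based ranks `r` (in her own ranking) of the items she receives. -/
noncomputable def util {m : ℕ} (s : ℕ → ℝ) (P : ℕ → Fin m ≃ Fin m) (k : ℕ → ℕ)
    (i : ℕ) : ℝ :=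
  ∑ x ∈ alloc P k i, s (((P i).symm x : ℕ) + 1)

/-- Permute the agents' rankings: agent at position `i` (0-based, `i < n`) gets the ranking
of agent `π i`. -/
def permProfile {m : ℕ} (n : ℕ) (P : ℕ → Fin m ≃ Fin m) (π : Equiv.Perm (Fin n)) :
    ℕ → Fin m ≃ Fin m :=
  fun i => if h : i < n then P ((π ⟨i, h⟩ : Fin n) : ℕ) else P i

/-- Egalitarian social welfare of the non-interleaving picking sequence `(d,…,d)` for `n`
agents (`n ≠ 0`). -/
noncomputable def SWe {m : ℕ} (n d : ℕ) (hn : n ≠ 0) (s : ℕ → ℝ)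
    (P : ℕ → Fin m ≃ Fin m) : ℝ :=
  (Finset.range n).inf' (Finset.nonempty_range_iff.mpr hn)
    (fun i => util s P (fun _ => d) i)

/-- Nash social welfare of the non-interleaving picking sequence `(d,…,d)` for `n`
agents. -/
noncomputable def SWn {m : ℕ} (n d : ℕ) (s : ℕ → ℝ) (P : ℕ → Fin m ≃ Fin m) : ℝ :=
  ∏ i ∈ Finset.range n, util s P (fun _ => d) i

/-! Whatever the rankings, an agent who picks `k` items when `a` items are already gone gets, in
order, items of rank at most `a + 1, …, a + k` and at least `1, …, k`, so her utility lies between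
`s_{a+1} + ⋯ + s_{a+k}` and `s_1 + ⋯ + s_k`. This gives both upper bounds on the price, and shows
that no welfare falls below the one attained when every agent meets her lower bound.

For the lower bounds, cut the items into consecutive blocks `0, …, n - 1` of `d` items and let every
agent rank blocks as wholes. Agent `0` swaps blocks `1` and `n - 1` in the natural order, and agent
`j + 1` swaps blocks `0` and `j`. In the order `0, 1, …, n - 1` the agent at position `i` gets
block `i`, to which she gives 0-based rank `i`: every agent meets her lower bound. In the cyclically
shifted order `1, …, n - 1, 0` position `i` still gets block `i`, but this is now her favourite
block, except for agent `0`, who gets her second block. -/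

open Finset

section TopK

/-- The 0-based rank of `x` under `σ` relative to the items of `S` (`x` need not belong to `S`). -/
def rankIn {m : ℕ} (σ : Fin m ≃ Fin m) (S : Finset (Fin m)) (x : Fin m) : ℕ :=
  #{y ∈ S | σ.symm y < σ.symm x}

variable {m k : ℕ} {σ : Fin m ≃ Fin m} {S : Finset (Fin m)} {x y : Fin m}

theorem mem_topk : x ∈ topk σ S k ↔ x ∈ S ∧ rankIn σ S x < k :=
  mem_filter

theorem topk_subset : topk σ S k ⊆ S :=
  filter_subset _ _

theorem rankIn_lt_rankIn (hx : x ∈ S) (h : σ.symm x < σ.symm y) :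
    rankIn σ S x < rankIn σ S y := by
  refine card_lt_card ((ssubset_iff_of_subset fun z hz => ?_).2 ⟨x, ?_, ?_⟩)
  · exact mem_filter.2 ⟨(mem_filter.1 hz).1, (mem_filter.1 hz).2.trans h⟩
  · exact mem_filter.2 ⟨hx, h⟩
  · exact fun hxx => lt_irrefl _ (mem_filter.1 hxx).2

theorem injOn_rankIn : Set.InjOn (rankIn σ S) S := by
  intro x hx y hy hxy
  rcases lt_trichotomy (σ.symm x) (σ.symm y) with hlt | heq | hgt
  · exact absurd hxy (rankIn_lt_rankIn hx hlt).ne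
  · exact σ.symm.injective heq
  · exact absurd hxy (rankIn_lt_rankIn hy hgt).ne'

theorem image_rankIn : S.image (rankIn σ S) = range #S := by
  refine eq_of_subset_of_card_le (image_subset_iff.2 fun x hx => ?_) ?_
  · exact mem_range.2 (card_lt_card (filter_ssubset.2 ⟨x, hx, lt_irrefl _⟩))
  · rw [card_range, card_image_of_injOn injOn_rankIn]

theorem injOn_rankIn_topk : Set.InjOn (rankIn σ S) (topk σ S k) :=
  injOn_rankIn.mono topk_subset

theorem image_rankIn_topk (hk : k ≤ #S) : (topk σ S k).image (rankIn σ S) = range k := by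
  ext c
  have hc : c < k → c ∈ S.image (rankIn σ S) := fun h =>
    image_rankIn (σ := σ) ▸ mem_range.2 (h.trans_le hk)
  simp only [mem_image, mem_topk, mem_range] at hc ⊢
  constructor
  · rintro ⟨x, hx, rfl⟩
    exact hx.2
  · intro h
    obtain ⟨x, hx, rfl⟩ := hc h
    exact ⟨x, ⟨hx, h⟩, rfl⟩

theorem card_topk (hk : k ≤ #S) : #(topk σ S k) = k := by
  rw [← card_image_of_injOn injOn_rankIn_topk, image_rankIn_topk hk, card_range]

theorem sum_topk_rankIn {M : Type*} [AddCommMonoid M] (hk : k ≤ #S) (f : ℕ → M) :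
    ∑ x ∈ topk σ S k, f (rankIn σ S x) = ∑ c ∈ range k, f c := by
  rw [← image_rankIn_topk hk, sum_image injOn_rankIn_topk]

theorem topk_eq_of_forall_lt {T : Finset (Fin m)} (hTS : T ⊆ S) (hcard : #T = k)
    (hlt : ∀ x ∈ T, ∀ y ∈ S, y ∉ T → σ.symm x < σ.symm y) : topk σ S k = T := by
  ext x
  rw [mem_topk, ← hcard]
  constructor
  · rintro ⟨hxS, hrank⟩
    by_contra hxT
    have hT : T ⊆ {y ∈ S | σ.symm y < σ.symm x} := fun y hy =>
      mem_filter.2 ⟨hTS hy, hlt y hy x hxS hxT⟩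
    exact hrank.not_ge (card_le_card hT)
  · intro hxT
    refine ⟨hTS hxT, card_lt_card ((ssubset_iff_of_subset fun y hy => ?_).2 ⟨x, hxT, ?_⟩)⟩
    · by_contra hyT
      exact lt_asymm (mem_filter.1 hy).2 (hlt x hxT y (mem_filter.1 hy).1 hyT)
    · exact fun hx => lt_irrefl _ (mem_filter.1 hx).2

variable (σ S x)

theorem rankIn_univ : rankIn σ univ x = σ.symm x := by
  rw [rankIn, ← card_map σ.symm.toEmbedding, ← Fin.card_Iio]
  congr 1
  ext y
  simp

theorem rankIn_le : rankIn σ S x ≤ σ.symm x :=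
  rankIn_univ σ x ▸ card_le_card (filter_subset_filter _ (subset_univ S))

theorem le_card_compl_add_rankIn : (σ.symm x : ℕ) ≤ #Sᶜ + rankIn σ S x := by
  rw [← rankIn_univ]
  refine (card_le_card fun y hy => ?_).trans (card_union_le _ _)
  by_cases hyS : y ∈ S
  · exact mem_union_right _ (mem_filter.2 ⟨hyS, (mem_filter.1 hy).2⟩)
  · exact mem_union_left _ (mem_compl.2 hyS)

end TopK

section RankSum

variable {s : ℕ → ℝ} {a b k m : ℕ}

/-- The total score of the `k` consecutive 1-based ranks `a + 1, …, a + k`. -/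
noncomputable def rankSum (s : ℕ → ℝ) (a k : ℕ) : ℝ :=
  ∑ j ∈ Icc (a + 1) (a + k), s j

theorem rankSum_eq_sum_range (s : ℕ → ℝ) (a k : ℕ) :
    rankSum s a k = ∑ c ∈ range k, s (a + c + 1) := by
  rw [rankSum, ← Ico_add_one_right_eq_Icc, sum_Ico_eq_sum_range]
  exact sum_congr (by congr 1; omega) fun c _ => by rw [add_right_comm]

theorem rankSum_le_rankSum (hs : AntitoneOn s (Set.Icc 1 m)) (hab : a ≤ b) (hb : b + k ≤ m) :
    rankSum s b k ≤ rankSum s a k := by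
  rw [rankSum_eq_sum_range, rankSum_eq_sum_range]
  refine sum_le_sum fun c hc => ?_
  have hck := mem_range.1 hc
  exact hs ⟨by omega, by omega⟩ ⟨by omega, by omega⟩ (by omega)

theorem rankSum_pos (hk : 0 < k) (hs : ∀ j ∈ Set.Icc (a + 1) (a + k), 0 < s j) :
    0 < rankSum s a k :=
  sum_pos (fun j hj => hs j (by simpa using hj)) (nonempty_Icc.2 (by omega))

end RankSum

section Allocation

variable {m : ℕ} {s : ℕ → ℝ} {P : ℕ → Fin m ≃ Fin m} {k : ℕ → ℕ} {i : ℕ}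

theorem card_remaining_add (h : ∑ j ∈ range i, k j ≤ m) :
    #(remaining P k i) + ∑ j ∈ range i, k j = m := by
  induction i with
  | zero => simp [remaining]
  | succ i ih =>
    rw [sum_range_succ] at h ⊢
    have hi := ih (by omega)
    rw [remaining, card_sdiff_of_subset topk_subset, card_topk (by omega)]
    omega

theorem le_card_remaining (h : ∑ j ∈ range (i + 1), k j ≤ m) : k i ≤ #(remaining P k i) := by
  rw [sum_range_succ] at h
  have hi := card_remaining_add (P := P) (k := k) (i := i) (by omega)
  omega

theorem card_compl_remaining (h : ∑ j ∈ range i, k j ≤ m) :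
    #(remaining P k i)ᶜ = ∑ j ∈ range i, k j := by
  rw [card_compl, Fintype.card_fin]
  have hi := card_remaining_add (P := P) h
  omega

theorem util_le_rankSum (hs : AntitoneOn s (Set.Icc 1 m)) (h : ∑ j ∈ range (i + 1), k j ≤ m) :
    util s P k i ≤ rankSum s 0 (k i) := by
  rw [rankSum_eq_sum_range, ← sum_topk_rankIn (σ := P i) (le_card_remaining h)]
  refine sum_le_sum fun x _ => ?_
  have hle := rankIn_le (P i) (remaining P k i) x
  exact hs ⟨by omega, by omega⟩ ⟨by omega, by omega⟩ (by omega)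

theorem rankSum_le_util (hs : AntitoneOn s (Set.Icc 1 m)) (h : ∑ j ∈ range (i + 1), k j ≤ m) :
    rankSum s (∑ j ∈ range i, k j) (k i) ≤ util s P k i := by
  rw [rankSum_eq_sum_range,
    ← sum_topk_rankIn (σ := P i) (le_card_remaining h) fun c => s (∑ j ∈ range i, k j + c + 1)]
  refine sum_le_sum fun x hx => ?_
  rw [sum_range_succ] at h
  have hle := le_card_compl_add_rankIn (P i) (remaining P k i) x
  rw [card_compl_remaining (by omega)] at hle
  have hlt := (mem_topk.1 hx).2
  exact hs ⟨by omega, by omega⟩ ⟨by omega, by omega⟩ (by omega)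

theorem alloc_eq_of_forall_lt {n : ℕ} {B : Fin n → Finset (Fin m)}
    (hdisj : Pairwise fun i j => Disjoint (B i) (B j)) (hcard : ∀ i, #(B i) = k i)
    (hlt : ∀ i, ∀ x ∈ B i, ∀ y, (∀ j ≤ i, y ∉ B j) → (P i).symm x < (P i).symm y) (i : Fin n) :
    alloc P k i = B i := by
  have halloc : ∀ i : Fin n, (∀ y, y ∈ remaining P k i ↔ ∀ j < i, y ∉ B j) →
      alloc P k i = B i := by
    intro i hrem
    refine topk_eq_of_forall_lt (fun x hx => ?_) (hcard i) fun x hx y hy hyB => ?_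
    · exact (hrem x).2 fun j hj hxj => disjoint_left.1 (hdisj hj.ne) hxj hx
    · refine hlt i x hx y fun j hj => ?_
      rcases hj.lt_or_eq with hji | rfl
      exacts [(hrem y).1 hy j hji, hyB]
  have hrem : ∀ l ≤ n, ∀ y, y ∈ remaining P k l ↔ ∀ j : Fin n, (j : ℕ) < l → y ∉ B j := by
    intro l
    induction l with
    | zero => simp [remaining]
    | succ l ih =>
      intro hl y
      have hl_alloc : alloc P k l = B ⟨l, hl⟩ := halloc ⟨l, hl⟩ (ih (Nat.le_of_lt hl))
      rw [remaining, ← alloc, mem_sdiff, ih (Nat.le_of_lt hl), hl_alloc]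
      constructor
      · rintro ⟨hbefore, hat⟩ j hj
        rcases Nat.lt_succ_iff_lt_or_eq.1 hj with hjl | rfl
        exacts [hbefore j hjl, hat]
      · exact fun h => ⟨fun j hj => h j (by omega), h ⟨l, hl⟩ l.lt_succ_self⟩
  exact halloc i (hrem i i.isLt.le)

end Allocation

section Welfare

variable {n d : ℕ} {s : ℕ → ℝ}

theorem mul_add_self_le_mul_of_lt {i : ℕ} (hi : i < n) : i * d + d ≤ d * n := by
  rw [← Nat.succ_mul, mul_comm d]
  exact Nat.mul_le_mul_right d hi

theorem util_mem_Icc_rankSum (hs : AntitoneOn s (Set.Icc 1 (d * n)))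
    (P : ℕ → Fin (d * n) ≃ Fin (d * n)) {i : ℕ} (hi : i < n) :
    util s P (fun _ => d) i ∈ Set.Icc (rankSum s (i * d) d) (rankSum s 0 d) := by
  have h : ∑ _j ∈ range (i + 1), d ≤ d * n := by
    simpa [add_one_mul] using mul_add_self_le_mul_of_lt (d := d) hi
  refine ⟨?_, util_le_rankSum hs h⟩
  simpa using rankSum_le_util (P := P) hs h

theorem rankSum_last_le (hs : AntitoneOn s (Set.Icc 1 (d * n))) {i : ℕ} (hi : i < n) :
    rankSum s ((n - 1) * d) d ≤ rankSum s (i * d) d :=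
  rankSum_le_rankSum hs (Nat.mul_le_mul_right d (by omega)) (mul_add_self_le_mul_of_lt (by omega))

theorem SWe_mem_Icc (hn : n ≠ 0) (hs : AntitoneOn s (Set.Icc 1 (d * n)))
    (P : ℕ → Fin (d * n) ≃ Fin (d * n)) :
    SWe n d hn s P ∈ Set.Icc (rankSum s ((n - 1) * d) d) (rankSum s 0 d) := by
  constructor
  · refine le_inf' _ _ fun i hi => ?_
    have hin := mem_range.1 hi
    exact (rankSum_last_le hs hin).trans (util_mem_Icc_rankSum hs P hin).1
  · have h0 : 0 < n := Nat.pos_of_ne_zero hn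
    exact (inf'_le _ (mem_range.2 h0)).trans (util_mem_Icc_rankSum hs P h0).2

theorem SWn_mem_Icc (hs : AntitoneOn s (Set.Icc 1 (d * n)))
    (hlast : 0 ≤ rankSum s ((n - 1) * d) d) (P : ℕ → Fin (d * n) ≃ Fin (d * n)) :
    SWn n d s P ∈ Set.Icc (∏ i ∈ range n, rankSum s (i * d) d) (rankSum s 0 d ^ n) := by
  have hblock : ∀ i ∈ range n, 0 ≤ rankSum s (i * d) d := fun i hi =>
    hlast.trans (rankSum_last_le hs (mem_range.1 hi))
  have hutil := fun i (hi : i ∈ range n) => util_mem_Icc_rankSum hs P (mem_range.1 hi)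
  refine ⟨prod_le_prod hblock fun i hi => (hutil i hi).1, ?_⟩
  calc SWn n d s P ≤ ∏ _i ∈ range n, rankSum s 0 d :=
        prod_le_prod (fun i hi => (hblock i hi).trans (hutil i hi).1) fun i hi => (hutil i hi).2
    _ = rankSum s 0 d ^ n := by rw [prod_const, card_range]

end Welfare

section AssignmentPrice

variable {m : ℕ} (n : ℕ) (W : (ℕ → Fin m ≃ Fin m) → ℝ) (P : ℕ → Fin m ≃ Fin m)

/-- The price of the assignment of agents to positions, for the welfare notion `W` at the
profile `P`: the ratio of the largest to the smallest welfare over all orders of the agents. -/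
noncomputable def assignmentPrice : ℝ :=
  (univ.sup' univ_nonempty fun π : Equiv.Perm (Fin n) => W (permProfile n P π)) /
    univ.inf' univ_nonempty fun π : Equiv.Perm (Fin n) => W (permProfile n P π)

variable {n W P} in
theorem assignmentPrice_mem_Icc {L M U : ℝ} (hL : 0 ≤ L) (hW : ∀ Q, W Q ∈ Set.Icc L U)
    (σ τ : Equiv.Perm (Fin n)) (hσ : W (permProfile n P σ) = L)
    (hτ : M ≤ W (permProfile n P τ)) : assignmentPrice n W P ∈ Set.Icc (M / L) (U / L) := by
  have hmin : (univ.inf' univ_nonempty fun π : Equiv.Perm (Fin n) => W (permProfile n P π)) = L :=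
    le_antisymm ((inf'_le _ (mem_univ σ)).trans_eq hσ) (le_inf' _ _ fun _ _ => (hW _).1)
  rw [assignmentPrice, hmin]
  exact ⟨div_le_div_of_nonneg_right
      (hτ.trans (le_sup' (fun π => W (permProfile n P π)) (mem_univ τ))) hL,
    div_le_div_of_nonneg_right (sup'_le _ _ fun _ _ => (hW _).2) hL⟩

end AssignmentPrice

section Blocks

variable {n : ℕ}

/-- Items as pairs (block, position inside the block): block `b` consists of the `d` consecutive
items `b * d, …, b * d + d - 1`. -/
def blockEquiv (n d : ℕ) : Fin n × Fin d ≃ Fin (d * n) :=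
  finProdFinEquiv.trans (finCongr (mul_comm n d))

theorem blockEquiv_val {d : ℕ} (p : Fin n × Fin d) : (blockEquiv n d p : ℕ) = p.1 * d + p.2 := by
  simp [blockEquiv, mul_comm, add_comm]

/-- The set of items of block `b`. -/
def block (d : ℕ) (b : Fin n) : Finset (Fin (d * n)) :=
  univ.map ((Function.Embedding.sectR b (Fin d)).trans (blockEquiv n d).toEmbedding)

theorem blockEquiv_mem_block {d : ℕ} {p : Fin n × Fin d} {b : Fin n} :
    blockEquiv n d p ∈ block d b ↔ p.1 = b := by
  simp [block, Prod.ext_iff, eq_comm]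

theorem card_block (d : ℕ) (b : Fin n) : #(block d b) = d := by
  simp [block]

theorem pairwise_disjoint_block (d : ℕ) :
    Pairwise fun b c : Fin n => Disjoint (block d b) (block d c) := by
  refine fun b c hbc => disjoint_left.2 fun x hxb hxc => hbc ?_
  obtain ⟨p, rfl⟩ := (blockEquiv n d).surjective x
  rw [← blockEquiv_mem_block.1 hxb, blockEquiv_mem_block.1 hxc]

/-- The ranking that lists whole blocks in the order `τ` (`τ r` is the block of 0-based rank `r`)
and leaves the order inside each block unchanged. -/
def blockRanking (d : ℕ) (τ : Equiv.Perm (Fin n)) : Fin (d * n) ≃ Fin (d * n) :=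
  (blockEquiv n d).permCongr (τ.prodCongr (Equiv.refl _))

theorem blockRanking_symm_blockEquiv {d : ℕ} (τ : Equiv.Perm (Fin n)) (p : Fin n × Fin d) :
    ((blockRanking d τ).symm (blockEquiv n d p) : ℕ) = τ.symm p.1 * d + p.2 := by
  have h : (blockRanking d τ).symm (blockEquiv n d p) = blockEquiv n d (τ.symm p.1, p.2) := by
    simp [blockRanking, Equiv.permCongr_def, Prod.map]
  rw [h, blockEquiv_val]

theorem blockRanking_symm_lt {d : ℕ} {τ : Equiv.Perm (Fin n)} {p q : Fin n × Fin d}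
    (h : τ.symm p.1 < τ.symm q.1) :
    (blockRanking d τ).symm (blockEquiv n d p) < (blockRanking d τ).symm (blockEquiv n d q) := by
  rw [Fin.lt_def, blockRanking_symm_blockEquiv, blockRanking_symm_blockEquiv]
  calc (τ.symm p.1 * d + p.2 : ℕ) < (τ.symm p.1 + 1) * d := by rw [add_one_mul]; omega
    _ ≤ τ.symm q.1 * d := Nat.mul_le_mul_right d h
    _ ≤ τ.symm q.1 * d + q.2 := Nat.le_add_right _ _

theorem sum_block_blockRanking {d : ℕ} (s : ℕ → ℝ) (τ : Equiv.Perm (Fin n)) (b : Fin n) :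
    ∑ x ∈ block d b, s (((blockRanking d τ).symm x : ℕ) + 1) = rankSum s (τ.symm b * d) d := by
  rw [rankSum_eq_sum_range, sum_range, block, sum_map]
  exact sum_congr rfl fun c _ => congrArg (s <| · + 1) (blockRanking_symm_blockEquiv τ (b, c))

theorem util_eq_rankSum_of_blockRanking {d : ℕ} (s : ℕ → ℝ) {P : ℕ → Fin (d * n) ≃ Fin (d * n)}
    {τ : Fin n → Equiv.Perm (Fin n)} (hP : ∀ i : Fin n, P i = blockRanking d (τ i))
    (hτ : ∀ i b, i < b → (τ i).symm i < (τ i).symm b) (i : Fin n) :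
    util s P (fun _ => d) i = rankSum s ((τ i).symm i * d) d := by
  have halloc : alloc P (fun _ => d) i = block d i := by
    refine alloc_eq_of_forall_lt (pairwise_disjoint_block d) (card_block d)
      (fun i x hx y hy => ?_) i
    obtain ⟨p, rfl⟩ := (blockEquiv n d).surjective x
    obtain ⟨q, rfl⟩ := (blockEquiv n d).surjective y
    have hiq : i < q.1 := not_le.1 fun hqi => hy q.1 hqi (blockEquiv_mem_block.2 rfl)
    rw [hP]
    exact blockRanking_symm_lt (blockEquiv_mem_block.1 hx ▸ hτ i q.1 hiq)
  rw [util, halloc, hP, sum_block_blockRanking]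

end Blocks

section SwapProfile

variable {n : ℕ}

/-- The order in which each of `n + 2` agents ranks the `n + 2` blocks: agent `0` swaps the blocks
`1` and `n + 1` in the natural order, and agent `j + 1` swaps the blocks `0` and `j`. -/
def swapOrder (n : ℕ) : Fin (n + 2) → Equiv.Perm (Fin (n + 2)) :=
  Fin.cases (Equiv.swap 1 (Fin.last _)) fun j => Equiv.swap 0 j.castSucc

theorem swapOrder_symm_self (i : Fin (n + 2)) : (swapOrder n i).symm i = i := by
  cases i using Fin.cases with
  | zero => exact Equiv.swap_apply_of_ne_of_ne Fin.zero_ne_one Fin.last_pos.ne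
  | succ j => exact Equiv.swap_apply_of_ne_of_ne j.succ_ne_zero j.castSucc_lt_succ.ne'

theorem symm_lt_symm_of_symm_eq_zero {τ : Equiv.Perm (Fin (n + 1))} {i b : Fin (n + 1)}
    (h : τ.symm i = 0) (hib : i ≠ b) : τ.symm i < τ.symm b :=
  h ▸ Fin.pos_iff_ne_zero.2 fun hb => hib (τ.symm.injective (h.trans hb.symm))

theorem swapOrder_symm_lt {i b : Fin (n + 2)} (hib : i < b) :
    (swapOrder n i).symm i < (swapOrder n i).symm b := by
  cases i using Fin.cases with
  | zero => exact symm_lt_symm_of_symm_eq_zero (swapOrder_symm_self 0) hib.ne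
  | succ j =>
    have hb : (swapOrder n j.succ).symm b = b := Equiv.swap_apply_of_ne_of_ne
      (Fin.ne_zero_of_lt hib) (j.castSucc_lt_succ.trans hib).ne'
    rwa [swapOrder_symm_self, hb]

theorem swapOrder_finRotate_symm_castSucc (j : Fin (n + 1)) :
    (swapOrder n (finRotate _ j.castSucc)).symm j.castSucc = 0 := by
  rw [finRotate_apply, Fin.coeSucc_eq_succ]
  exact Equiv.swap_apply_right _ _

theorem swapOrder_finRotate_symm_last :
    (swapOrder n (finRotate _ (Fin.last _))).symm (Fin.last _) = 1 := by
  rw [finRotate_last]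
  exact Equiv.swap_apply_right _ _

theorem swapOrder_finRotate_symm_lt {i b : Fin (n + 2)} (hib : i < b) :
    (swapOrder n (finRotate _ i)).symm i < (swapOrder n (finRotate _ i)).symm b := by
  cases i using Fin.lastCases with
  | last => exact absurd hib (Fin.le_last b).not_gt
  | cast j => exact symm_lt_symm_of_symm_eq_zero (swapOrder_finRotate_symm_castSucc j) hib.ne

/-- The witness profile: agent `i` ranks whole blocks of `d` items in the order `swapOrder n i`.
Indices `i ≥ n + 2`, which name no agent, are reduced modulo `n + 2`. -/
def swapProfile (n d : ℕ) (i : ℕ) : Fin (d * (n + 2)) ≃ Fin (d * (n + 2)) :=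
  blockRanking d (swapOrder n (Fin.ofNat _ i))

variable {d : ℕ} (s : ℕ → ℝ)

theorem permProfile_swapProfile (π : Equiv.Perm (Fin (n + 2))) (i : Fin (n + 2)) :
    permProfile (n + 2) (swapProfile n d) π i = blockRanking d (swapOrder n (π i)) := by
  simp [permProfile, swapProfile]

theorem util_swapProfile_one (i : Fin (n + 2)) :
    util s (permProfile (n + 2) (swapProfile n d) 1) (fun _ => d) i = rankSum s (i * d) d := by
  rw [util_eq_rankSum_of_blockRanking s (permProfile_swapProfile 1)
    (fun _ _ hib => swapOrder_symm_lt hib), Equiv.Perm.one_apply, swapOrder_symm_self]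

theorem util_swapProfile_finRotate (i : Fin (n + 2)) :
    util s (permProfile (n + 2) (swapProfile n d) (finRotate _)) (fun _ => d) i =
      rankSum s ((swapOrder n (finRotate _ i)).symm i * d) d :=
  util_eq_rankSum_of_blockRanking s (permProfile_swapProfile _)
    (fun _ _ hib => swapOrder_finRotate_symm_lt hib) i

theorem util_swapProfile_finRotate_castSucc (j : Fin (n + 1)) :
    util s (permProfile (n + 2) (swapProfile n d) (finRotate _)) (fun _ => d) j.castSucc =
      rankSum s 0 d := by
  rw [util_swapProfile_finRotate, swapOrder_finRotate_symm_castSucc, Fin.val_zero, zero_mul]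

theorem util_swapProfile_finRotate_last :
    util s (permProfile (n + 2) (swapProfile n d) (finRotate _)) (fun _ => d)
      (Fin.last (n + 1)) = rankSum s d d := by
  rw [util_swapProfile_finRotate, swapOrder_finRotate_symm_last, Fin.val_one, one_mul]

variable {s}

theorem SWe_swapProfile_one (hs : AntitoneOn s (Set.Icc 1 (d * (n + 2)))) :
    SWe (n + 2) d (by omega) s (permProfile (n + 2) (swapProfile n d) 1) =
      rankSum s ((n + 1) * d) d :=
  le_antisymm
    ((inf'_le _ (self_mem_range_succ (n + 1))).trans_eq (util_swapProfile_one s (Fin.last _)))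
    (SWe_mem_Icc _ hs _).1

theorem le_SWe_swapProfile_finRotate (hs : AntitoneOn s (Set.Icc 1 (d * (n + 2)))) :
    rankSum s d d ≤
      SWe (n + 2) d (by omega) s (permProfile (n + 2) (swapProfile n d) (finRotate _)) := by
  refine le_inf' _ _ fun i hi => ?_
  lift i to Fin (n + 2) using mem_range.1 hi
  cases i using Fin.lastCases with
  | last => exact (util_swapProfile_finRotate_last s).ge
  | cast j =>
    have hd : d + d ≤ d * (n + 2) := by
      simpa using mul_add_self_le_mul_of_lt (n := n + 2) (d := d) (i := 1) (by omega)
    rw [util_swapProfile_finRotate_castSucc]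
    exact rankSum_le_rankSum hs (Nat.zero_le d) hd

variable (s)

theorem SWn_swapProfile_one :
    SWn (n + 2) d s (permProfile (n + 2) (swapProfile n d) 1) =
      ∏ i ∈ range (n + 2), rankSum s (i * d) d :=
  prod_congr rfl fun i hi => util_swapProfile_one s ⟨i, mem_range.1 hi⟩

theorem SWn_swapProfile_finRotate :
    SWn (n + 2) d s (permProfile (n + 2) (swapProfile n d) (finRotate _)) =
      rankSum s 0 d ^ (n + 1) * rankSum s d d := by
  rw [SWn, prod_range, Fin.prod_univ_castSucc, util_swapProfile_finRotate_last]
  simp only [util_swapProfile_finRotate_castSucc, prod_const, card_univ, Fintype.card_fin]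

end SwapProfile

theorem price_of_assignment_egalitarian_nash_general {n : ℕ} (d : ℕ) (hn : 2 ≤ n) :
    ∃ P : ℕ → Fin (d * n) ≃ Fin (d * n), ∀ s : ℕ → ℝ, AntitoneOn s (Set.Icc 1 (d * n)) →
      0 < rankSum s ((n - 1) * d) d →
      assignmentPrice n (SWe n d (by omega) s) P ∈
        Set.Icc (rankSum s d d / rankSum s ((n - 1) * d) d)
          (rankSum s 0 d / rankSum s ((n - 1) * d) d) ∧
      assignmentPrice n (SWn n d s) P ∈
        Set.Icc (rankSum s 0 d ^ (n - 1) * rankSum s d d / ∏ i ∈ range n, rankSum s (i * d) d)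
          (rankSum s 0 d ^ n / ∏ i ∈ range n, rankSum s (i * d) d) := by
  obtain ⟨n, rfl⟩ := Nat.exists_eq_add_of_le' hn
  refine ⟨swapProfile n d, fun s hs hlast => ⟨?_, ?_⟩⟩
  · exact assignmentPrice_mem_Icc hlast.le (SWe_mem_Icc _ hs) 1 (finRotate _)
      (SWe_swapProfile_one hs) (le_SWe_swapProfile_finRotate hs)
  · have hprod : 0 ≤ ∏ i ∈ range (n + 2), rankSum s (i * d) d :=
      prod_nonneg fun i hi => hlast.le.trans (rankSum_last_le hs (mem_range.1 hi))
    exact assignmentPrice_mem_Icc hprod (SWn_mem_Icc hs hlast.le) 1 (finRotate _)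
      (SWn_swapProfile_one s) (SWn_swapProfile_finRotate s).ge

/-- Price of the assignment of agents to positions, egalitarian and Nash cases.  For
`n ≥ 2` agents, `m = d·n` items and a strictly positive scoring vector `s`, there is a
preference profile `P` such that for the non-interleaving picking sequence `k = (d,…,d)`:
(i) `Σ_{j=d+1}^{2d} s_j / Σ_{j=(n-1)d+1}^{m} s_j ≤ max_π SW^e_{P_π}(k) / min_π SW^e_{P_π}(k)
     ≤ Σ_{j=1}^{d} s_j / Σ_{j=(n-1)d+1}^{m} s_j`, and
(ii) `(Σ_{j=1}^{d} s_j)^{n-1} · Σ_{j=d+1}^{2d} s_j / Π_{i=1}^{n} Σ_{j=(i-1)d+1}^{id} s_j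
     ≤ max_π SW^n_{P_π}(k) / min_π SW^n_{P_π}(k)
     ≤ (Σ_{j=1}^{d} s_j)^n / Π_{i=1}^{n} Σ_{j=(i-1)d+1}^{id} s_j`. -/
theorem price_of_assignment_egalitarian_nash
    (n d : ℕ) (hn : 2 ≤ n) (hd : 1 ≤ d) (s : ℕ → ℝ)
    (hmono : ∀ i j : ℕ, 1 ≤ i → i ≤ j → j ≤ d * n → s j ≤ s i)
    (hpos : ∀ j : ℕ, 1 ≤ j → j ≤ d * n → 0 < s j) :
    ∃ P : ℕ → Fin (d * n) ≃ Fin (d * n),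
      ((∑ j ∈ Finset.Icc (d + 1) (2 * d), s j) /
            (∑ j ∈ Finset.Icc ((n - 1) * d + 1) (d * n), s j) ≤
          (Finset.univ.sup' Finset.univ_nonempty
              (fun π : Equiv.Perm (Fin n) =>
                SWe n d (by omega) s (permProfile n P π))) /
            (Finset.univ.inf' Finset.univ_nonempty
              (fun π : Equiv.Perm (Fin n) =>
                SWe n d (by omega) s (permProfile n P π))) ∧
        (Finset.univ.sup' Finset.univ_nonempty
              (fun π : Equiv.Perm (Fin n) =>
                SWe n d (by omega) s (permProfile n P π))) /
            (Finset.univ.inf' Finset.univ_nonempty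
              (fun π : Equiv.Perm (Fin n) =>
                SWe n d (by omega) s (permProfile n P π))) ≤
          (∑ j ∈ Finset.Icc 1 d, s j) /
            (∑ j ∈ Finset.Icc ((n - 1) * d + 1) (d * n), s j)) ∧
      ((∑ j ∈ Finset.Icc 1 d, s j) ^ (n - 1) *
            (∑ j ∈ Finset.Icc (d + 1) (2 * d), s j) /
            (∏ i ∈ Finset.range n, ∑ j ∈ Finset.Icc (i * d + 1) ((i + 1) * d), s j) ≤
          (Finset.univ.sup' Finset.univ_nonempty
              (fun π : Equiv.Perm (Fin n) => SWn n d s (permProfile n P π))) /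
            (Finset.univ.inf' Finset.univ_nonempty
              (fun π : Equiv.Perm (Fin n) => SWn n d s (permProfile n P π))) ∧
        (Finset.univ.sup' Finset.univ_nonempty
              (fun π : Equiv.Perm (Fin n) => SWn n d s (permProfile n P π))) /
            (Finset.univ.inf' Finset.univ_nonempty
              (fun π : Equiv.Perm (Fin n) => SWn n d s (permProfile n P π))) ≤
          (∑ j ∈ Finset.Icc 1 d, s j) ^ n /
            (∏ i ∈ Finset.range n, ∑ j ∈ Finset.Icc (i * d + 1) ((i + 1) * d), s j)) := by
  obtain ⟨P, hP⟩ := price_of_assignment_egalitarian_nash_general d hn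
  have hend : (n - 1) * d + d = d * n := by
    rw [← Nat.succ_mul, Nat.succ_eq_add_one, Nat.sub_add_cancel (by omega), mul_comm]
  have hlast : 0 < rankSum s ((n - 1) * d) d :=
    rankSum_pos hd fun j hj => hpos j ((Nat.le_add_left 1 _).trans hj.1) (hj.2.trans_eq hend)
  have hprice := hP s (fun i hi j hj hij => hmono i j hi.1 hij hj.2) hlast
  simp only [assignmentPrice, rankSum, zero_add, hend, ← two_mul, ← add_one_mul] at hprice
  exact ⟨P, hprice⟩
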